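/- The Union axiom is realized: let A be a pca. There exists an element e ∈ A such that for every x ∈ V(A) there exists y ∈ V(A) such that for every triple ⟨a,b,u⟩ ∈ x and every triple ⟨c,d,v⟩ ∈ u: (ea)c and (eb)d are defined and (ea)c = (eb)d ⊩ v ∈ y. -/

import Mathlib

universe u

/-- A partial combinatory algebra: a set with at least two elements, a partial
binary application, and combinators `k`, `s` with `ka↓`, `sa↓`, `sab↓`,
`kab ≃ a` and `sabc ≃ ac(bc)`. -/
structure PCA (A : Type u) where
  app : A → A → Part A
  k : A
  s : A
  nontrivial : ∃ a b : A, a ≠ b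
  k_def : ∀ a : A, (app k a).Dom
  s_def : ∀ a : A, (app s a).Dom
  s_app_def : ∀ a b : A, ((app s a).bind fun x => app x b).Dom
  k_spec : ∀ a b : A, ((app k a).bind fun x => app x b) = Part.some a
  s_spec : ∀ a b c : A,
    (((app s a).bind fun x => app x b).bind fun x => app x c)
      = (app a c).bind fun u => (app b c).bind fun v => app u v

namespace PCA
variable {A : Type u} (P : PCA A)

/-- Apply a possibly undefined value to an element of `A` (left association). -/
def apl (x : Part A) (b : A) : Part A := x.bind fun a => P.app a b

end PCA

/-- The ZF-set coding the triple `⟨a, b, y⟩` (via an embedding `inj` of the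
pca carrier into the sets). -/
def TripleName {A : Type} (inj : A → ZFSet) (a b : A) (y : ZFSet) : ZFSet :=
  ZFSet.pair (inj a) (ZFSet.pair (inj b) y)

/-- The realizability universe `V(A)`: a ZF-set is a name iff it is a set of
triples `⟨a, b, y⟩` with `a b : A` and `y` a name.  (For injective `inj` the
decomposition of a triple is unique, so the two clauses express exactly this.) -/
inductive IsName {A : Type} (inj : A → ZFSet) : ZFSet → Prop
  | mk (x : ZFSet)
      (htriple : ∀ z ∈ x, ∃ (a b : A) (y : ZFSet), z = TripleName inj a b y)
      (hname : ∀ (a b : A) (y : ZFSet), TripleName inj a b y ∈ x → IsName inj y) :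
      IsName inj x

/-- Extensional generic realizability for the atomic formulas, relative to
fixed projection combinators `p0`, `p1`:
`Realizes P p0 p1 inj true a b x y` means `a = b ⊩ x ∈ y`, and
`Realizes P p0 p1 inj false a b x y` means `a = b ⊩ x = y`.
Since the value of a partial application is unique when it exists, the pairs
of hypotheses `(h1def, h1)` and `(h2def, h2)` of the `eq` constructor express
exactly "for every ⟨c,d,z⟩ ∈ x, (ac)₀ = (bd)₀ ⊩ z ∈ y" (with all the
applications defined), and symmetrically for `y` with `p1`; the relation is
well-founded in the rank of the names, hence this least fixed point is the
relation defined by transfinite recursion. -/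
inductive Realizes {A : Type} (P : PCA A) (p0 p1 : A) (inj : A → ZFSet) :
    Bool → A → A → ZFSet → ZFSet → Prop
  | mem {a b : A} {x y : ZFSet} (a0 b0 a1 b1 : A) (z : ZFSet)
      (ha0 : a0 ∈ P.app p0 a) (hb0 : b0 ∈ P.app p0 b)
      (ha1 : a1 ∈ P.app p1 a) (hb1 : b1 ∈ P.app p1 b)
      (hz : TripleName inj a0 b0 z ∈ y)
      (he : Realizes P p0 p1 inj false a1 b1 x z) :
      Realizes P p0 p1 inj true a b x y
  | eq {a b : A} {x y : ZFSet}
      (h1def : ∀ (c d : A) (z : ZFSet), TripleName inj c d z ∈ x →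
        ∃ u v u0 v0 : A, u ∈ P.app a c ∧ v ∈ P.app b d ∧
          u0 ∈ P.app p0 u ∧ v0 ∈ P.app p0 v)
      (h1 : ∀ (c d : A) (z : ZFSet) (u v u0 v0 : A), TripleName inj c d z ∈ x →
        u ∈ P.app a c → v ∈ P.app b d → u0 ∈ P.app p0 u → v0 ∈ P.app p0 v →
        Realizes P p0 p1 inj true u0 v0 z y)
      (h2def : ∀ (c d : A) (z : ZFSet), TripleName inj c d z ∈ y →
        ∃ u v u1 v1 : A, u ∈ P.app a c ∧ v ∈ P.app b d ∧
          u1 ∈ P.app p1 u ∧ v1 ∈ P.app p1 v)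
      (h2 : ∀ (c d : A) (z : ZFSet) (u v u1 v1 : A), TripleName inj c d z ∈ y →
        u ∈ P.app a c → v ∈ P.app b d → u1 ∈ P.app p1 u → v1 ∈ P.app p1 v →
        Realizes P p0 p1 inj true u1 v1 z x) :
      Realizes P p0 p1 inj false a b x y

/-- `a = b ⊩ x = y`. -/
def RealEq {A : Type} (P : PCA A) (p0 p1 : A) (inj : A → ZFSet) (a b : A) (x y : ZFSet) : Prop :=
  Realizes P p0 p1 inj false a b x y

/-- `a = b ⊩ x ∈ y`. -/
def RealMem {A : Type} (P : PCA A) (p0 p1 : A) (inj : A → ZFSet) (a b : A) (x y : ZFSet) : Prop :=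
  Realizes P p0 p1 inj true a b x y

/-!
For `⟨a, b, u⟩ ∈ x` and `⟨c, d, v⟩ ∈ u` the triple `⟨c, d, v⟩` itself belongs to the set-theoretic
union `y` of all such `u`, so `v` is a member of `y` as soon as `v = v` is realized. By the
fixed-point theorem there is `i ∈ A` with `i c ≃ p (p c i) (p c i)`, and induction on names shows
that this single `i` realizes `x = x` for every name `x`. Hence `e = λ a c. p c i` works.
-/

namespace PCA
variable {A : Type u}

/-- Applicative terms over `A` in `n` variables. Variables are de Bruijn indices: `var 0` is the
one bound by the innermost abstraction. -/
inductive Term (A : Type u) : ℕ → Type u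
  | var {n : ℕ} (i : Fin n) : Term A n
  | const {n : ℕ} (a : A) : Term A n
  | ap {n : ℕ} (t u : Term A n) : Term A n

/-- The value of a term under the assignment `ρ`; it is defined only if the values of all subterms
are. -/
def Term.eval (P : PCA A) {n : ℕ} (ρ : Fin n → A) : Term A n → Part A
  | var i => Part.some (ρ i)
  | const a => Part.some a
  | ap t u => (t.eval P ρ).bind fun x => (u.eval P ρ).bind fun y => P.app x y

/-- Bracket abstraction `λ*`, binding the variable `0`. -/
def Term.lam (P : PCA A) {n : ℕ} : Term A (n + 1) → Term A n
  | var i => i.cases (ap (ap (const P.s) (const P.k)) (const P.k)) fun j => ap (const P.k) (var j)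
  | const a => ap (const P.k) (const a)
  | ap t u => ap (ap (const P.s) (t.lam P)) (u.lam P)

variable (P : PCA A)

theorem exists_app_k_eq_some (b : A) :
    ∃ f, P.app P.k b = Part.some f ∧ ∀ a, P.app f a = Part.some b := by
  obtain ⟨f, hf⟩ := Part.dom_iff_mem.1 (P.k_def b)
  rw [← Part.eq_some_iff] at hf
  exact ⟨f, hf, fun a => by simpa only [hf, Part.bind_some] using P.k_spec b a⟩

theorem exists_app_s_app_eq_some (b c : A) :
    ∃ f, ((P.app P.s b).bind fun x => P.app x c) = Part.some f ∧
      ∀ a, P.app f a = (P.app b a).bind fun u => (P.app c a).bind fun v => P.app u v := by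
  obtain ⟨f, hf⟩ := Part.dom_iff_mem.1 (P.s_app_def b c)
  rw [← Part.eq_some_iff] at hf
  exact ⟨f, hf, fun a => by simpa only [hf, Part.bind_some] using P.s_spec b c a⟩

theorem Term.exists_eval_lam_eq_some {n : ℕ} (ρ : Fin n → A) (t : Term A (n + 1)) :
    ∃ f, (t.lam P).eval P ρ = Part.some f ∧
      ∀ a, P.app f a = t.eval P (Matrix.vecCons a ρ) := by
  match t with
  | .var i =>
    induction i using Fin.cases with
    | zero =>
      obtain ⟨f, hf, hfa⟩ := P.exists_app_s_app_eq_some P.k P.k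
      refine ⟨f, by simpa [lam, eval] using hf, fun a => ?_⟩
      obtain ⟨g, hg, hga⟩ := P.exists_app_k_eq_some a
      simp [hfa, hg, hga, eval]
    | succ j =>
      obtain ⟨f, hf, hfa⟩ := P.exists_app_k_eq_some (ρ j)
      exact ⟨f, by simpa [lam, eval] using hf, fun a => by simpa [eval] using hfa a⟩
  | .const b =>
    obtain ⟨f, hf, hfa⟩ := P.exists_app_k_eq_some b
    exact ⟨f, by simpa [lam, eval] using hf, fun a => by simpa [eval] using hfa a⟩
  | .ap t u =>
    obtain ⟨f, hf, hfa⟩ := t.exists_eval_lam_eq_some ρ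
    obtain ⟨g, hg, hga⟩ := u.exists_eval_lam_eq_some ρ
    obtain ⟨e, he, hea⟩ := P.exists_app_s_app_eq_some f g
    exact ⟨e, by simpa [lam, eval, hf, hg] using he, fun a => by rw [hea, hfa, hga, eval]⟩

theorem exists_apl_app_eq_eval (t : Term A 2) :
    ∃ f, ∀ a, (P.app f a).Dom ∧ ∀ b, P.apl (P.app f a) b = t.eval P ![b, a] := by
  obtain ⟨f, -, hf⟩ := (t.lam P).exists_eval_lam_eq_some P ![]
  refine ⟨f, fun a => ?_⟩
  obtain ⟨g, hg, hgt⟩ := t.exists_eval_lam_eq_some P ![a]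
  have hfa : P.app f a = Part.some g := (hf a).trans hg
  exact ⟨hfa ▸ trivial, fun b => by rw [apl, hfa, Part.bind_some, hgt]⟩

-- `i` is `w w` for `w = λ x c. f (x x) c`; the second argument delays the evaluation of `x x`.
theorem exists_app_eq_apl_app (f : A) : ∃ i, ∀ c, P.app i c = P.apl (P.app f i) c := by
  obtain ⟨w, hw⟩ := P.exists_apl_app_eq_eval
    (.ap (.ap (.const f) (.ap (.var 1) (.var 1))) (.var 0))
  obtain ⟨i, hi⟩ := Part.dom_iff_mem.1 (hw w).1
  rw [← Part.eq_some_iff] at hi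
  refine ⟨i, fun c => ?_⟩
  simpa [apl, Term.eval, hi] using (hw w).2 c

/-- The pairing combinators of a pca: `p a b` is defined, and `p0`, `p1` recover `a` and `b`
from it. -/
structure IsPairing (p p0 p1 : A) : Prop where
  dom : ∀ a b : A, (P.apl (P.app p a) b).Dom
  fst : ∀ a b : A, ((P.apl (P.app p a) b).bind fun w => P.app p0 w) = Part.some a
  snd : ∀ a b : A, ((P.apl (P.app p a) b).bind fun w => P.app p1 w) = Part.some b

namespace IsPairing
variable {P} {p p0 p1 : A} (h : P.IsPairing p p0 p1)

/-- The value of `p a b`. -/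
def pair (a b : A) : A := (P.apl (P.app p a) b).get (h.dom a b)

theorem apl_app_eq_pair (a b : A) : P.apl (P.app p a) b = Part.some (h.pair a b) :=
  (Part.some_get (h.dom a b)).symm

theorem app_fst_pair (a b : A) : P.app p0 (h.pair a b) = Part.some a := by
  simpa only [h.apl_app_eq_pair, Part.bind_some] using h.fst a b

theorem app_snd_pair (a b : A) : P.app p1 (h.pair a b) = Part.some b := by
  simpa only [h.apl_app_eq_pair, Part.bind_some] using h.snd a b

theorem exists_apl_app_eq_pair (i : A) :
    ∃ e, ∀ a c, P.apl (P.app e a) c = Part.some (h.pair c i) := by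
  obtain ⟨e, he⟩ := P.exists_apl_app_eq_eval (.ap (.ap (.const p) (.var 0)) (.const i))
  refine ⟨e, fun a c => ?_⟩
  simpa [Term.eval, ← h.apl_app_eq_pair, apl] using (he a).2 c

/-- Realizers of the reflexivity of equality: `i c ≃ p (p c i) (p c i)` for all `c`. -/
def IsReflRealizer (i : A) : Prop :=
  ∀ c, P.app i c = Part.some (h.pair (h.pair c i) (h.pair c i))

variable {h} in
theorem IsReflRealizer.bind_app_fst {i : A} (hi : h.IsReflRealizer i) (c : A) :
    (P.app i c).bind (P.app p0) = Part.some (h.pair c i) := by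
  rw [hi, Part.bind_some, h.app_fst_pair]

variable {h} in
theorem IsReflRealizer.bind_app_snd {i : A} (hi : h.IsReflRealizer i) (c : A) :
    (P.app i c).bind (P.app p1) = Part.some (h.pair c i) := by
  rw [hi, Part.bind_some, h.app_snd_pair]

theorem exists_isReflRealizer : ∃ i, h.IsReflRealizer i := by
  let pairSelf : Term A 2 := .ap (.ap (.const p) (.var 0)) (.var 1)
  obtain ⟨f, hf⟩ := P.exists_apl_app_eq_eval (.ap (.ap (.const p) pairSelf) pairSelf)
  obtain ⟨i, hi⟩ := P.exists_app_eq_apl_app f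
  refine ⟨i, fun c => ?_⟩
  have hpair (a b : A) : ((P.app p a).bind fun x => P.app x b) = Part.some (h.pair a b) :=
    h.apl_app_eq_pair a b
  rw [hi, (hf i).2]
  simp [pairSelf, Term.eval, hpair]

end IsPairing

end PCA

namespace IsName
variable {A : Type} {inj : A → ZFSet}

theorem exists_eq_tripleName {x z : ZFSet} (hx : IsName inj x) (hz : z ∈ x) :
    ∃ (a b : A) (y : ZFSet), z = TripleName inj a b y := by
  cases hx with
  | mk _ htriple _ => exact htriple z hz

theorem of_tripleName_mem {x y : ZFSet} {a b : A} (hx : IsName inj x)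
    (hy : TripleName inj a b y ∈ x) : IsName inj y := by
  cases hx with
  | mk _ _ hname => exact hname a b y hy

theorem sUnion {s : ZFSet} (hs : ∀ u ∈ s, IsName inj u) : IsName inj s.sUnion := by
  refine .mk _ (fun z hz => ?_) fun a b y hy => ?_
  · obtain ⟨u, hu, hzu⟩ := ZFSet.mem_sUnion.1 hz
    exact (hs u hu).exists_eq_tripleName hzu
  · obtain ⟨u, hu, hyu⟩ := ZFSet.mem_sUnion.1 hy
    exact (hs u hu).of_tripleName_mem hyu

end IsName

section NameDomain
variable {A : Type} {inj : A → ZFSet}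

theorem mem_sUnion_sUnion_of_pair_mem {a b s : ZFSet} (h : ZFSet.pair a b ∈ s) :
    b ∈ s.sUnion.sUnion :=
  ZFSet.mem_sUnion_of_mem (ZFSet.mem_pair.2 (.inr rfl))
    (ZFSet.mem_sUnion_of_mem (ZFSet.mem_pair.2 (.inr rfl)) h)

/-- The set of all `u` that occur in a triple `⟨a, b, u⟩ ∈ x`. Since `u` is a component of nested
Kuratowski pairs, it is found in the fourfold union of `x`. -/
def nameDomain (inj : A → ZFSet) (x : ZFSet) : ZFSet :=
  x.sUnion.sUnion.sUnion.sUnion.sep fun u => ∃ a b, TripleName inj a b u ∈ x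

theorem mem_nameDomain {x u : ZFSet} :
    u ∈ nameDomain inj x ↔ ∃ a b, TripleName inj a b u ∈ x := by
  refine ⟨fun h => (ZFSet.mem_sep.1 h).2, fun ⟨a, b, h⟩ => ZFSet.mem_sep.2 ⟨?_, a, b, h⟩⟩
  exact mem_sUnion_sUnion_of_pair_mem (mem_sUnion_sUnion_of_pair_mem h)

theorem IsName.of_mem_nameDomain {x u : ZFSet} (hx : IsName inj x) (hu : u ∈ nameDomain inj x) :
    IsName inj u :=
  let ⟨_, _, h⟩ := mem_nameDomain.1 hu
  hx.of_tripleName_mem h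

end NameDomain

section Realizability
variable {A : Type} {P : PCA A} {p p0 p1 : A} {inj : A → ZFSet} {x y : ZFSet}

/-- `r = s ⊩ x ∈ y` for possibly undefined `r` and `s`, which includes that both are defined. -/
def RealMemPart (P : PCA A) (p0 p1 : A) (inj : A → ZFSet) (r s : Part A) (x y : ZFSet) : Prop :=
  ∃ a ∈ r, ∃ b ∈ s, RealMem P p0 p1 inj a b x y

theorem RealMemPart.realMem {r s : Part A} {a b : A} (h : RealMemPart P p0 p1 inj r s x y)
    (ha : a ∈ r) (hb : b ∈ s) : RealMem P p0 p1 inj a b x y := by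
  obtain ⟨a', ha', b', hb', h⟩ := h
  rwa [Part.mem_unique ha ha', Part.mem_unique hb hb']

theorem RealMemPart.exists_mem_app {r s : Part A} {q : A}
    (h : RealMemPart P p0 p1 inj (r.bind (P.app q)) (s.bind (P.app q)) x y) :
    ∃ u v u' v', u ∈ r ∧ v ∈ s ∧ u' ∈ P.app q u ∧ v' ∈ P.app q v := by
  obtain ⟨u', hu', v', hv', -⟩ := h
  obtain ⟨u, hu, huu'⟩ := Part.mem_bind_iff.1 hu'
  obtain ⟨v, hv, hvv'⟩ := Part.mem_bind_iff.1 hv'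
  exact ⟨u, v, u', v', hu, hv, huu', hvv'⟩

theorem RealEq.of_forall_realMemPart {a b : A}
    (hxy : ∀ c d z, TripleName inj c d z ∈ x → RealMemPart P p0 p1 inj
      ((P.app a c).bind (P.app p0)) ((P.app b d).bind (P.app p0)) z y)
    (hyx : ∀ c d z, TripleName inj c d z ∈ y → RealMemPart P p0 p1 inj
      ((P.app a c).bind (P.app p1)) ((P.app b d).bind (P.app p1)) z x) :
    RealEq P p0 p1 inj a b x y :=
  .eq (fun c d z hz => (hxy c d z hz).exists_mem_app)
    (fun c d z _ _ _ _ hz hu hv hu0 hv0 =>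
      (hxy c d z hz).realMem (Part.mem_bind hu hu0) (Part.mem_bind hv hv0))
    (fun c d z hz => (hyx c d z hz).exists_mem_app)
    fun c d z _ _ _ _ hz hu hv hu1 hv1 =>
      (hyx c d z hz).realMem (Part.mem_bind hu hu1) (Part.mem_bind hv hv1)

theorem RealEq.realMem_pair {a b c d : A} {z : ZFSet} (h : P.IsPairing p p0 p1)
    (hxz : RealEq P p0 p1 inj a b x z) (hz : TripleName inj c d z ∈ y) :
    RealMem P p0 p1 inj (h.pair c a) (h.pair d b) x y :=
  .mem c d a b z (Part.eq_some_iff.1 (h.app_fst_pair c a)) (Part.eq_some_iff.1 (h.app_fst_pair d b))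
    (Part.eq_some_iff.1 (h.app_snd_pair c a)) (Part.eq_some_iff.1 (h.app_snd_pair d b)) hz hxz

theorem PCA.IsPairing.IsReflRealizer.realEq {h : P.IsPairing p p0 p1} {i : A}
    (hi : h.IsReflRealizer i) (hx : IsName inj x) : RealEq P p0 p1 inj i i x x := by
  induction hx with
  | mk x _ _ ih =>
    have hmem (c d : A) (z : ZFSet) (hz : TripleName inj c d z ∈ x) :
        RealMemPart P p0 p1 inj (.some (h.pair c i)) (.some (h.pair d i)) z x :=
      ⟨_, Part.mem_some _, _, Part.mem_some _, (ih c d z hz).realMem_pair h hz⟩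
    refine RealEq.of_forall_realMemPart (fun c d z hz => ?_) fun c d z hz => ?_
    · simpa only [hi.bind_app_fst] using hmem c d z hz
    · simpa only [hi.bind_app_snd] using hmem c d z hz

end Realizability

/-- **The Union axiom is realized**: there is `e ∈ A` such that for every
`x ∈ V(A)` there is `y ∈ V(A)` such that for all `⟨a,b,u⟩ ∈ x` and all
`⟨c,d,v⟩ ∈ u`, `(ea)c` and `(eb)d` are defined and `(ea)c = (eb)d ⊩ v ∈ y`. -/
theorem union_realized {A : Type} (P : PCA A)
    (p p0 p1 : A)
    (hp : ∀ a b : A, (P.apl (P.app p a) b).Dom)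
    (hp0 : ∀ a b : A, ((P.apl (P.app p a) b).bind fun w => P.app p0 w) = Part.some a)
    (hp1 : ∀ a b : A, ((P.apl (P.app p a) b).bind fun w => P.app p1 w) = Part.some b)
    (inj : A → ZFSet) (hinj : Function.Injective inj)
    :
    ∃ e : A, ∀ x : ZFSet, IsName inj x →
      ∃ y : ZFSet, IsName inj y ∧
        ∀ (a b : A) (u : ZFSet), TripleName inj a b u ∈ x →
          ∀ (c d : A) (v : ZFSet), TripleName inj c d v ∈ u →
            ∃ r s : A, r ∈ P.apl (P.app e a) c ∧ s ∈ P.apl (P.app e b) d ∧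
              RealMem P p0 p1 inj r s v y := by
  have h : P.IsPairing p p0 p1 := ⟨hp, hp0, hp1⟩
  obtain ⟨i, hi⟩ := h.exists_isReflRealizer
  obtain ⟨e, he⟩ := h.exists_apl_app_eq_pair i
  refine ⟨e, fun x hx => ⟨(nameDomain inj x).sUnion,
    .sUnion fun u => hx.of_mem_nameDomain, fun a b u hu c d v hv => ?_⟩⟩
  have hux : u ∈ nameDomain inj x := mem_nameDomain.2 ⟨a, b, hu⟩
  have hv_isName : IsName inj v := (hx.of_mem_nameDomain hux).of_tripleName_mem hv
  exact ⟨h.pair c i, h.pair d i, Part.eq_some_iff.1 (he a c), Part.eq_some_iff.1 (he b d),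
    (hi.realEq hv_isName).realMem_pair h (ZFSet.mem_sUnion_of_mem hv hux)⟩
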